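/- arXiv:2006.06757 — 2 statements merged into one kernel-verified Lean document; each statement's English description precedes it below -/
import Mathlib

section
/- Let A be a right Artinian right uniserial ring, let M = mA be a cyclic right A-module generated by an element m, and let R = A((x)) be the Laurent series ring. Then the cyclic right R-submodule mR of the right R-module M((x)) of Laurent series with coefficients in M is a uniserial Artinian module. -/
/-!
By Hopkins and Levitzki, a nonzero left Artinian left uniserial ring `B` is local with nilpotent
radical `B p`. In `B((x))` every series either has all its coefficients in `B p`, and then lies in
`B((x)) p`, or is a unit: cut off the terms before the first coefficient outside `B p`; what
remains has an invertible leading coefficient, while the part cut off lies in the nil left ideal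
`B((x)) p`. Hence every Laurent series is a unit times a power of `p`, so `B((x))` has only the
left ideals `B((x)) p ^ k`, and it is left Artinian and left uniserial. Both properties pass to its
cyclic modules. Right modules over `A` are the case `B = Aᵐᵒᵖ`.
-/

open HahnSeries
open scoped LaurentSeries

/-- A module is uniserial if its submodules are linearly ordered by inclusion. A ring `R` is left
uniserial if `IsUniserial R R`, and right uniserial if `IsUniserial Rᵐᵒᵖ R`. -/
def IsUniserial (R M : Type*) [Semiring R] [AddCommMonoid M] [Module R M] : Prop :=
  ∀ X Y : Submodule R M, X ≤ Y ∨ Y ≤ X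

namespace IsUniserial

section Module

variable {R M N : Type*} [Semiring R] [AddCommMonoid M] [Module R M] [AddCommMonoid N] [Module R N]

theorem of_surjective (h : IsUniserial R M) (f : M →ₗ[R] N) (hf : Function.Surjective f) :
    IsUniserial R N := fun X Y =>
  (h (X.comap f) (Y.comap f)).imp (Submodule.comap_le_comap_iff_of_surjective hf).1
    (Submodule.comap_le_comap_iff_of_surjective hf).1

theorem span_singleton (h : IsUniserial R R) (m : M) : IsUniserial R (Submodule.span R {m}) := by
  rw [← LinearMap.range_toSpanSingleton]
  exact h.of_surjective _ (LinearMap.toSpanSingleton R M m).surjective_rangeRestrict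

theorem isPrincipal_of_fg (h : IsUniserial R M) {X : Submodule R M} (hX : X.FG) :
    X.IsPrincipal := by
  induction X, hX using Submodule.fg_induction with
  | singleton x => exact ⟨x, rfl⟩
  | sup X Y _ _ ihX ihY =>
    rcases h X Y with hXY | hYX
    · rwa [sup_eq_right.2 hXY]
    · rwa [sup_eq_left.2 hYX]

end Module

theorem span_singleton_eq_top_of_notMem_jacobson {R : Type*} [Ring R] (h : IsUniserial R R) {b : R}
    (hb : b ∉ Ring.jacobson R) : Ideal.span {b} = ⊤ := by
  rw [Ring.jacobson_eq_sInf_isMaximal, Submodule.mem_sInf] at hb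
  push Not at hb
  obtain ⟨L, hL, hbL⟩ := hb
  have hspan_not_le : ¬ Ideal.span {b} ≤ L := fun hle => hbL (hle (Ideal.mem_span_singleton_self b))
  have hle_span : L ≤ Ideal.span {b} := (h L _).resolve_right hspan_not_le
  exact (Ideal.isMaximal_def.1 hL).lt_iff.1 (lt_of_le_not_ge hle_span hspan_not_le)

end IsUniserial

theorem isUnit_add_of_mem_of_forall_isNilpotent {R : Type*} [Ring R] {I : Ideal R}
    (hI : ∀ z ∈ I, IsNilpotent z) {u y : R} (hu : IsUnit u) (hy : y ∈ I) : IsUnit (u + y) := by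
  obtain ⟨u, rfl⟩ := hu
  have hnil : IsNilpotent (↑u⁻¹ * y) := hI _ (I.mul_mem_left _ hy)
  have hfactor : (u : R) + y = u * (1 + ↑u⁻¹ * y) := by
    rw [mul_add, mul_one, Units.mul_inv_cancel_left]
  rw [hfactor]
  exact u.isUnit.mul hnil.isUnit_one_add

theorem isNilpotent_of_mem_span_singleton {R : Type*} [Semiring R] {p : R}
    (hp : IsNilpotent p) (hmul : ∀ s, p * s ∈ Ideal.span {p}) {z : R}
    (hz : z ∈ Ideal.span {p}) : IsNilpotent z := by
  obtain ⟨g, rfl⟩ := Ideal.mem_span_singleton'.1 hz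
  have hpow : ∀ k, ∃ s, s * p ^ k = (g * p) ^ k := by
    intro k
    induction k with
    | zero => exact ⟨1, by simp only [pow_zero, mul_one]⟩
    | succ k ih =>
      obtain ⟨s, hs⟩ := ih
      obtain ⟨t, ht⟩ := Ideal.mem_span_singleton'.1 (hmul s)
      refine ⟨g * t, ?_⟩
      calc g * t * p ^ (k + 1) = g * (t * p) * p ^ k := by simp only [pow_succ', mul_assoc]
        _ = g * p * (s * p ^ k) := by simp only [ht, mul_assoc]
        _ = (g * p) ^ (k + 1) := by rw [hs, pow_succ']
  obtain ⟨n, hn⟩ := hp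
  obtain ⟨s, hs⟩ := hpow n
  exact ⟨n, by rw [← hs, hn, mul_zero]⟩

/-- A nilpotent element `p` of a ring `R` such that every non-unit lies in the left ideal `R p`.
It plays the role of a uniformizer in an Artinian quotient of a discrete valuation ring: the powers
of `p` generate all left ideals. -/
structure IsNilpotentUniformizer {R : Type*} [Ring R] (p : R) : Prop where
  isNilpotent : IsNilpotent p
  isUnit_or_mem_span : ∀ b, IsUnit b ∨ b ∈ Ideal.span {p}

theorem IsUniserial.exists_isNilpotentUniformizer {R : Type*} [Ring R] [IsArtinianRing R]
    (h : IsUniserial R R) : ∃ p : R, IsNilpotentUniformizer p := by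
  obtain ⟨p, hp⟩ := h.isPrincipal_of_fg (IsNoetherian.noetherian (Ring.jacobson R))
  rw [Ideal.submodule_span_eq] at hp
  refine ⟨p, ?_, fun b => ?_⟩
  · have hpJ : p ∈ Ring.jacobson R := hp ▸ Ideal.mem_span_singleton_self p
    obtain ⟨n, hn⟩ := IsSemiprimaryRing.isNilpotent (R := R)
    exact ⟨n, by simpa only [hn, Ideal.zero_eq_bot, Ideal.mem_bot] using Ideal.pow_mem_pow hpJ n⟩
  · by_cases hb : b ∈ Ring.jacobson R
    · exact Or.inr (hp ▸ hb)
    · obtain ⟨c, hc⟩ := Ideal.mem_span_singleton'.1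
        ((Ideal.eq_top_iff_one _).1 (h.span_singleton_eq_top_of_notMem_jacobson hb))
      exact Or.inl (IsUnit.of_mul_eq_one_right c hc)

namespace IsNilpotentUniformizer

variable {R : Type*} [Ring R] {p : R}

theorem mul_mem_span (h : IsNilpotentUniformizer p) (s : R) : p * s ∈ Ideal.span {p} := by
  rcases h.isUnit_or_mem_span (p * s) with hunit | hmem
  · -- `p` would be both nilpotent and right invertible, which forces `1 = 0`.
    obtain ⟨t, ht⟩ := hunit.exists_right_inv
    obtain ⟨n, hn⟩ := h.isNilpotent
    have hone : p ^ n * (s * t) ^ n = 1 := pow_mul_pow_eq_one n (by rw [← mul_assoc, ht])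
    rw [hn, zero_mul] at hone
    have := subsingleton_of_zero_eq_one hone
    rw [Subsingleton.elim (p * s) 0]
    exact zero_mem _
  · exact hmem

theorem exists_eq_unit_mul_pow (h : IsNilpotentUniformizer p) (f : R) :
    ∃ (u : Rˣ) (k : ℕ), f = u * p ^ k := by
  have hdiv : ∀ m, (∃ (u : Rˣ) (k : ℕ), f = u * p ^ k) ∨ ∃ g, f = g * p ^ m := by
    intro m
    induction m with
    | zero => exact Or.inr ⟨f, by rw [pow_zero, mul_one]⟩
    | succ m ih =>
      rcases ih with hf | ⟨g, hg⟩
      · exact Or.inl hf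
      rcases h.isUnit_or_mem_span g with ⟨u, rfl⟩ | hgp
      · exact Or.inl ⟨u, m, hg⟩
      · obtain ⟨c, rfl⟩ := Ideal.mem_span_singleton'.1 hgp
        exact Or.inr ⟨c, by rw [hg, pow_succ', mul_assoc]⟩
  obtain ⟨n, hn⟩ := h.isNilpotent
  rcases hdiv n with hf | ⟨g, hg⟩
  · exact hf
  · exact ⟨1, n, by rw [hg, hn, mul_zero, mul_zero]⟩

theorem exists_eq_span_pow (h : IsNilpotentUniformizer p) (I : Ideal R) :
    ∃ k ≤ nilpotencyClass p, I = Ideal.span {p ^ k} := by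
  classical
  have hclass : p ^ nilpotencyClass p ∈ I := by
    rw [pow_nilpotencyClass h.isNilpotent]
    exact I.zero_mem
  have hexists : ∃ k, p ^ k ∈ I := ⟨_, hclass⟩
  refine ⟨Nat.find hexists, Nat.find_min' hexists hclass, le_antisymm (fun f hf => ?_) ?_⟩
  · obtain ⟨u, j, rfl⟩ := h.exists_eq_unit_mul_pow f
    have hj : Nat.find hexists ≤ j := Nat.find_min' hexists (by
      simpa only [Units.inv_mul_cancel_left] using I.mul_mem_left ↑u⁻¹ hf)
    exact Ideal.mem_span_singleton'.2
      ⟨u * p ^ (j - Nat.find hexists), by rw [mul_assoc, pow_sub_mul_pow p hj]⟩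
  · exact (Ideal.span_singleton_le_iff_mem I).2 (Nat.find_spec hexists)

theorem isUniserial (h : IsNilpotentUniformizer p) : IsUniserial R R := by
  have hanti : Antitone fun k => Ideal.span {p ^ k} := fun k l hkl =>
    (Ideal.span_singleton_le_iff_mem _).2
      (Ideal.mem_span_singleton'.2 ⟨p ^ (l - k), pow_sub_mul_pow p hkl⟩)
  intro I J
  obtain ⟨k, -, rfl⟩ := h.exists_eq_span_pow I
  obtain ⟨l, -, rfl⟩ := h.exists_eq_span_pow J
  exact (le_total l k).imp (@hanti l k) (@hanti k l)

theorem isArtinianRing (h : IsNilpotentUniformizer p) : IsArtinianRing R := by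
  have hsurj : Function.Surjective fun k : Fin (nilpotencyClass p + 1) =>
      Ideal.span {p ^ (k : ℕ)} := fun I => by
    obtain ⟨k, hk, rfl⟩ := h.exists_eq_span_pow I
    exact ⟨⟨k, Nat.lt_succ_of_le hk⟩, rfl⟩
  have : Finite (Ideal R) := Finite.of_surjective _ hsurj
  exact (inferInstance : WellFoundedLT (Ideal R))

end IsNilpotentUniformizer

theorem mem_span_single_zero_iff {Γ R : Type*} [AddCommMonoid Γ] [PartialOrder Γ]
    [IsOrderedCancelAddMonoid Γ] [Semiring R] {p : R} {f : HahnSeries Γ R} :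
    f ∈ Ideal.span {single (0 : Γ) p} ↔ ∀ i, f.coeff i ∈ Ideal.span {p} := by
  classical
  simp only [Ideal.mem_span_singleton']
  constructor
  · rintro ⟨g, rfl⟩ i
    exact ⟨g.coeff i, coeff_mul_single_zero.symm⟩
  · intro h
    choose c hc using h
    let g : HahnSeries Γ R :=
      { coeff := fun i => if f.coeff i = 0 then 0 else c i
        isPWO_support' := f.isPWO_support.mono fun i hi h0 => hi (if_pos h0) }
    refine ⟨g, HahnSeries.ext (funext fun i => ?_)⟩
    rw [coeff_mul_single_zero]
    by_cases h0 : f.coeff i = 0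
    · simp only [g, h0, if_true, zero_mul]
    · simp only [g, h0, if_false, hc]

theorem leadingCoeff_sub_truncLT {Γ R : Type*} [LinearOrder Γ] [AddGroup R] {f : HahnSeries Γ R}
    {k : Γ} (hk : f.coeff k ≠ 0) : (f - truncLT k f).leadingCoeff = f.coeff k := by
  have hcoeff : (f - truncLT k f).coeff k = f.coeff k := by
    rw [coeff_sub, coeff_truncLT_of_le le_rfl, sub_zero]
  have horder : (f - truncLT k f).orderTop = k := by
    refine orderTop_eq_of_le (by rwa [mem_support, hcoeff]) fun j hj => ?_
    by_contra! hjk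
    exact hj (by rw [coeff_sub, coeff_truncLT_of_lt hjk, sub_self])
  rw [leadingCoeff, horder, WithTop.recTopCoe_coe, hcoeff]

theorem isNilpotent_single_zero {Γ R : Type*} [AddCommMonoid Γ] [PartialOrder Γ]
    [IsOrderedCancelAddMonoid Γ] [Semiring R] {r : R} (hr : IsNilpotent r) :
    IsNilpotent (single (0 : Γ) r) :=
  hr.map (C : R →+* HahnSeries Γ R)

theorem isUnit_single {Γ R : Type*} [AddCommGroup Γ] [PartialOrder Γ] [IsOrderedAddMonoid Γ]
    [Semiring R] (a : Γ) {r : R} (hr : IsUnit r) : IsUnit (single a r) := by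
  obtain ⟨u, rfl⟩ := hr
  exact ⟨⟨single a ↑u, single (-a) ↑u⁻¹,
    by rw [single_mul_single, add_neg_cancel, Units.mul_inv, single_zero_one],
    by rw [single_mul_single, neg_add_cancel, Units.inv_mul, single_zero_one]⟩, rfl⟩

theorem isUnit_of_isUnit_leadingCoeff {R : Type*} [Ring R] {f : R⸨X⸩}
    (hf : IsUnit f.leadingCoeff) : IsUnit f := by
  have hpart : IsUnit f.powerSeriesPart := by
    rwa [PowerSeries.isUnit_iff_constantCoeff, ← PowerSeries.coeff_zero_eq_constantCoeff_apply,
      LaurentSeries.powerSeriesPart_coeff, Nat.cast_zero, add_zero, ← leadingCoeff_eq]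
  rw [← f.single_order_mul_powerSeriesPart]
  exact (isUnit_single f.order isUnit_one).mul (hpart.map _)

namespace IsNilpotentUniformizer

variable {R : Type*} [Ring R] {p : R}

theorem isNilpotent_of_mem_span_single_zero {Γ : Type*} [AddCommMonoid Γ] [PartialOrder Γ]
    [IsOrderedCancelAddMonoid Γ] (h : IsNilpotentUniformizer p) {z : HahnSeries Γ R}
    (hz : z ∈ Ideal.span {single 0 p}) : IsNilpotent z := by
  refine isNilpotent_of_mem_span_singleton (isNilpotent_single_zero h.isNilpotent)
    (fun s => mem_span_single_zero_iff.2 fun i => ?_) hz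
  rw [coeff_single_zero_mul]
  exact h.mul_mem_span _

theorem single_zero (h : IsNilpotentUniformizer p) :
    IsNilpotentUniformizer (single 0 p : R⸨X⸩) := by
  refine ⟨isNilpotent_single_zero h.isNilpotent, fun f => or_iff_not_imp_right.2 fun hf => ?_⟩
  rw [mem_span_single_zero_iff, not_forall] at hf
  have hwf : {i | f.coeff i ∉ Ideal.span {p}}.IsWF :=
    f.isWF_support.mono fun i hi h0 => hi (h0 ▸ zero_mem _)
  obtain ⟨k, hk, hmin⟩ : ∃ k, f.coeff k ∉ Ideal.span {p} ∧ ∀ i < k, f.coeff i ∈ Ideal.span {p} :=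
    ⟨hwf.min hf, hwf.min_mem hf, fun i hi => not_not.1 fun hi' => hwf.not_lt_min hf hi' hi⟩
  have hlead : IsUnit (f - truncLT k f) := by
    apply isUnit_of_isUnit_leadingCoeff
    rw [leadingCoeff_sub_truncLT fun h0 => hk (h0 ▸ zero_mem _)]
    exact (h.isUnit_or_mem_span _).resolve_right hk
  have htrunc : truncLT k f ∈ Ideal.span {single (0 : ℤ) p} := by
    refine mem_span_single_zero_iff.2 fun i => ?_
    rw [HahnSeries.coeff_truncLT]
    split_ifs with hi
    · exact hmin i hi
    · exact zero_mem _
  rw [← sub_add_cancel f (truncLT k f)]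
  exact isUnit_add_of_mem_of_forall_isNilpotent
    (fun _ => h.isNilpotent_of_mem_span_single_zero) hlead htrunc

end IsNilpotentUniformizer

theorem stmt14_general (A : Type*) [Ring A] (hart : IsArtinian Aᵐᵒᵖ A) (huni : IsUniserial Aᵐᵒᵖ A)
    {N : Type*} [AddCommGroup N] [Module (HahnSeries ℤ Aᵐᵒᵖ) N] (e : N) :
    IsUniserial (HahnSeries ℤ Aᵐᵒᵖ) (Submodule.span (HahnSeries ℤ Aᵐᵒᵖ) {e}) ∧
      IsArtinian (HahnSeries ℤ Aᵐᵒᵖ) (Submodule.span (HahnSeries ℤ Aᵐᵒᵖ) {e}) := by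
  let op : A ≃ₗ[Aᵐᵒᵖ] Aᵐᵒᵖ := MulOpposite.opLinearEquiv Aᵐᵒᵖ
  have : IsArtinianRing Aᵐᵒᵖ := isArtinian_of_linearEquiv op
  have huni_op : IsUniserial Aᵐᵒᵖ Aᵐᵒᵖ := huni.of_surjective op.toLinearMap op.surjective
  obtain ⟨p, hp⟩ := huni_op.exists_isNilpotentUniformizer
  have : IsArtinianRing (HahnSeries ℤ Aᵐᵒᵖ) := hp.single_zero.isArtinianRing
  exact ⟨hp.single_zero.isUniserial.span_singleton e,
    isArtinian_span_of_finite _ (Set.finite_singleton e)⟩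

/-- Let `A` be a right Artinian right uniserial ring (right ideals are the
`Aᵐᵒᵖ`-submodules of `A`), and let `M = mA` be a cyclic right `A`-module (an
`Aᵐᵒᵖ`-module).  Form the module `M((x))` of Laurent series with coefficients in `M`,
which is a right module over the Laurent series ring `R = A((x))`; equivalently, it is
the left module `HahnModule ℤ Aᵐᵒᵖ M` over `Aᵐᵒᵖ((x)) = HahnSeries ℤ Aᵐᵒᵖ`, the
opposite ring of `R`.  Then the cyclic submodule `mR` generated in `M((x))` by the
constant series `m` is a uniserial Artinian module. -/
theorem stmt14 (A : Type*) [Ring A]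
    (hart : IsArtinian Aᵐᵒᵖ A)
    (huni : ∀ I J : Submodule Aᵐᵒᵖ A, I ≤ J ∨ J ≤ I)
    (M : Type*) [AddCommGroup M] [Module Aᵐᵒᵖ M]
    (m : M) (hm : Submodule.span Aᵐᵒᵖ {m} = ⊤)
    (mR : Submodule (HahnSeries ℤ Aᵐᵒᵖ) (HahnModule ℤ Aᵐᵒᵖ M))
    (hmR : mR = Submodule.span (HahnSeries ℤ Aᵐᵒᵖ)
      {(HahnModule.of Aᵐᵒᵖ) (HahnSeries.single (0 : ℤ) m)}) :
    (∀ X Y : Submodule (HahnSeries ℤ Aᵐᵒᵖ) mR, X ≤ Y ∨ Y ≤ X) ∧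
      IsArtinian (HahnSeries ℤ Aᵐᵒᵖ) mR := by
  subst hmR
  exact stmt14_general A hart huni _
end

section
/- Let A be a ring, let R = A((x)) be the Laurent series ring, and let e be a nonzero idempotent of A such that the corner ring eAe is a right uniserial right Artinian ring. Then the corner ring eRe is a right uniserial right Artinian ring; in particular, e is a local idempotent of R. -/
/-- The corner ring `eAe` of a ring `A` at an idempotent `e`, realized as the
subtype of elements fixed by left and right multiplication by `e`
(for an idempotent `e`, `{x | e * x = x ∧ x * e = x} = eAe`). -/
def Corner {A : Type*} [Ring A] {e : A} (_he : IsIdempotentElem e) : Type _ :=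
  {x : A // e * x = x ∧ x * e = x}

namespace Corner

variable {A : Type*} [Ring A] {e : A} {he : IsIdempotentElem e}

instance : Zero (Corner he) := ⟨⟨0, by simp⟩⟩
instance : One (Corner he) := ⟨⟨e, he, he⟩⟩
instance : Add (Corner he) :=
  ⟨fun x y => ⟨x.1 + y.1, by rw [mul_add, x.2.1, y.2.1], by rw [add_mul, x.2.2, y.2.2]⟩⟩
instance : Neg (Corner he) :=
  ⟨fun x => ⟨-x.1, by rw [mul_neg, x.2.1], by rw [neg_mul, x.2.2]⟩⟩
instance : Sub (Corner he) :=
  ⟨fun x y => ⟨x.1 - y.1, by rw [mul_sub, x.2.1, y.2.1], by rw [sub_mul, x.2.2, y.2.2]⟩⟩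
instance : Mul (Corner he) :=
  ⟨fun x y => ⟨x.1 * y.1, by rw [← mul_assoc, x.2.1], by rw [mul_assoc, y.2.2]⟩⟩
instance : SMul ℕ (Corner he) :=
  ⟨fun n x => ⟨n • x.1, by rw [mul_smul_comm, x.2.1], by rw [smul_mul_assoc, x.2.2]⟩⟩
instance : SMul ℤ (Corner he) :=
  ⟨fun n x => ⟨n • x.1, by rw [mul_smul_comm, x.2.1], by rw [smul_mul_assoc, x.2.2]⟩⟩

instance : AddCommGroup (Corner he) :=
  Function.Injective.addCommGroup (fun x : Corner he => x.1) Subtype.val_injective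
    rfl (fun _ _ => rfl) (fun _ => rfl) (fun _ _ => rfl) (fun _ _ => rfl) (fun _ _ => rfl)

/-- The corner ring `eAe` is a ring with identity element `e`. -/
instance : Ring (Corner he) where
  __ := (inferInstance : AddCommGroup (Corner he))
  mul_assoc x y z := by exact Subtype.ext (mul_assoc x.1 y.1 z.1)
  one_mul x := Subtype.ext x.2.1
  mul_one x := Subtype.ext x.2.2
  left_distrib x y z := by exact Subtype.ext (mul_add x.1 y.1 z.1)
  right_distrib x y z := by exact Subtype.ext (add_mul x.1 y.1 z.1)
  zero_mul x := by exact Subtype.ext (zero_mul x.1)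
  mul_zero x := by exact Subtype.ext (mul_zero x.1)

end Corner


/-- The image of an idempotent `e` of `A` under the constant-series embedding
`A → A((x))` is an idempotent of the Laurent series ring. -/
theorem isIdempotentElem_C {A : Type*} [Ring A] {e : A} (he : IsIdempotentElem e) :
    IsIdempotentElem (HahnSeries.C e : LaurentSeries A) := by
  unfold IsIdempotentElem
  rw [← map_mul, he]

/-! A nontrivial right uniserial right Artinian ring `B` is local, and its maximal ideal is `p B`
for some nilpotent `p`; conversely, over a ring with such a `p` every element is `p ^ k` times a
unit, so the right ideals are the finitely many `p ^ k B`. The existence of such a `p` passes from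
`B` to `B((x))`: if some coefficient of `f` is a unit, split `f` at the first such index. The lower
part lies in `p B((x))`, a nilpotent ideal, and the upper part is a unit because its leading
coefficient is. It remains to identify `e A((x)) e` with `(e A e)((x))`. -/

section Monoid

variable {M : Type*} [Monoid M] {p a : M}

theorem dvd_mul_left_of_forall_dvd_mul (hp : ∀ s, p ∣ s * p) (h : p ∣ a) (s : M) : p ∣ s * a := by
  obtain ⟨c, rfl⟩ := h
  rw [← mul_assoc]
  exact (hp s).mul_right c

theorem pow_dvd_mul_pow_of_forall_dvd_mul (hp : ∀ s, p ∣ s * p) (n : ℕ) (s : M) :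
    p ^ n ∣ s * p ^ n := by
  induction n with
  | zero => simp
  | succ n ih =>
    obtain ⟨c, hc⟩ := ih
    rw [pow_succ, ← mul_assoc, hc, mul_assoc]
    exact mul_dvd_mul_left _ (hp c)

theorem pow_dvd_pow_of_forall_dvd_mul (hp : ∀ s, p ∣ s * p) (h : p ∣ a) (n : ℕ) :
    p ^ n ∣ a ^ n := by
  obtain ⟨c, rfl⟩ := h
  induction n with
  | zero => simp
  | succ n ih =>
    rw [pow_succ', pow_succ', mul_assoc]
    exact mul_dvd_mul_left _
      (dvd_mul_left_of_forall_dvd_mul (pow_dvd_mul_pow_of_forall_dvd_mul hp n) ih c)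

end Monoid

theorem isNilpotent_of_dvd_of_forall_dvd_mul {M : Type*} [MonoidWithZero M] {p a : M}
    (hp : ∀ s, p ∣ s * p) (hnil : IsNilpotent p) (h : p ∣ a) : IsNilpotent a := by
  obtain ⟨n, hn⟩ := hnil
  exact ⟨n, zero_dvd_iff.1 (hn ▸ pow_dvd_pow_of_forall_dvd_mul hp h n)⟩

theorem subsingleton_of_isNilpotent_of_mul_eq_one {M : Type*} [MonoidWithZero M] {p t : M}
    (hp : IsNilpotent p) (h : t * p = 1) : Subsingleton M := by
  obtain ⟨n, hn⟩ := hp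
  rw [← isLeftRegular_zero_iff_subsingleton, ← hn]
  exact (isLeftRegular_of_mul_eq_one h).pow n

theorem isUnit_add_of_dvd_of_forall_dvd_mul {R : Type*} [Ring R] {p u a : R}
    (hp : ∀ s, p ∣ s * p) (hnil : IsNilpotent p) (hu : IsUnit u) (h : p ∣ a) : IsUnit (u + a) := by
  obtain ⟨v, rfl⟩ := hu
  have hva : IsNilpotent (↑v⁻¹ * a) := isNilpotent_of_dvd_of_forall_dvd_mul hp hnil
    (dvd_mul_left_of_forall_dvd_mul hp h _)
  have hfactor : (v + a : R) = v * (1 + ↑v⁻¹ * a) := by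
    rw [mul_add, mul_one, Units.mul_inv_cancel_left]
  exact hfactor ▸ v.isUnit.mul hva.isUnit_one_add

section Semiring

variable {R : Type*} [Semiring R]

theorem mem_span_op_singleton_iff_dvd {a b : R} : b ∈ Submodule.span Rᵐᵒᵖ {a} ↔ a ∣ b := by
  simp only [Submodule.mem_span_singleton, MulOpposite.op_surjective.exists,
    MulOpposite.smul_eq_mul_unop, MulOpposite.unop_op, dvd_def, eq_comm]

theorem span_op_singleton_le_span_op_singleton_iff_dvd {a b : R} :
    Submodule.span Rᵐᵒᵖ {a} ≤ Submodule.span Rᵐᵒᵖ {b} ↔ b ∣ a := by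
  rw [Submodule.span_singleton_le_iff_mem, mem_span_op_singleton_iff_dvd]

end Semiring

section RightArtinian

variable {R : Type*}

theorem isArtinianRing_mulOpposite [Semiring R] [IsArtinian Rᵐᵒᵖ R] : IsArtinianRing Rᵐᵒᵖ :=
  isArtinian_of_linearEquiv (MulOpposite.opLinearEquiv Rᵐᵒᵖ : R ≃ₗ[Rᵐᵒᵖ] Rᵐᵒᵖ)

theorem isNoetherian_mulOpposite_of_isArtinian [Ring R] [IsArtinian Rᵐᵒᵖ R] :
    IsNoetherian Rᵐᵒᵖ R :=
  have : IsArtinianRing Rᵐᵒᵖ := isArtinianRing_mulOpposite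
  IsSemiprimaryRing.isNoetherian_iff_isArtinian.2 ‹_›

theorem isDedekindFiniteMonoid_of_isArtinian_mulOpposite [Ring R] [IsArtinian Rᵐᵒᵖ R] :
    IsDedekindFiniteMonoid R :=
  have : IsArtinianRing Rᵐᵒᵖ := isArtinianRing_mulOpposite
  MulOpposite.isDedekindFiniteMonoid_iff.1 inferInstance

theorem exists_pow_succ_dvd_pow [Semiring R] [IsArtinian Rᵐᵒᵖ R] (a : R) :
    ∃ n, a ^ (n + 1) ∣ a ^ n := by
  let f : Module.End Rᵐᵒᵖ R := RingEquiv.moduleEndSelfOp R a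
  have hf (n : ℕ) (b : R) : (f ^ n) b = a ^ n * b := by
    rw [← map_pow, RingEquiv.moduleEndSelfOp_apply, DistribSMul.toLinearMap_apply, smul_eq_mul]
  obtain ⟨n, hn⟩ := IsArtinian.monotone_stabilizes f.iterateRange
  have hrange : LinearMap.range (f ^ n) = LinearMap.range (f ^ (n + 1)) := hn _ n.le_succ
  have hmem : a ^ n ∈ LinearMap.range (f ^ (n + 1)) := hrange ▸ ⟨1, by rw [hf, mul_one]⟩
  obtain ⟨b, hb⟩ := hmem
  exact ⟨n, b, by rw [← hb, hf]⟩

theorem exists_not_isUnit_forall_isUnit_or_dvd [Semiring R] [Nontrivial R]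
    [IsNoetherian Rᵐᵒᵖ R] (huni : ∀ I J : Submodule Rᵐᵒᵖ R, I ≤ J ∨ J ≤ I) :
    ∃ p : R, ¬IsUnit p ∧ ∀ a, IsUnit a ∨ p ∣ a := by
  obtain ⟨-, ⟨p, hp, rfl⟩, hmax⟩ := exists_maximal_of_wellFoundedGT
    (· ∈ (fun a : R ↦ Submodule.span Rᵐᵒᵖ {a}) '' {a | ¬IsUnit a}) ⟨_, 0, not_isUnit_zero, rfl⟩
  refine ⟨p, hp, fun a ↦ or_iff_not_imp_left.2 fun ha ↦ ?_⟩
  rw [← span_op_singleton_le_span_op_singleton_iff_dvd]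
  exact (huni _ _).elim id (hmax ⟨a, ha, rfl⟩)

end RightArtinian

/-- `p` is a nilpotent uniformizer of `R` if it is nilpotent and every non-unit lies in the right
ideal `pR`, which is written as divisibility: `p ∣ a` means `a = p * b` for some `b`. A nontrivial
ring has a nilpotent uniformizer if and only if it is right uniserial and right Artinian. -/
structure IsNilpotentUniformizer_s16 {R : Type*} [Semiring R] (p : R) : Prop where
  isNilpotent : IsNilpotent p
  isUnit_or_dvd (a : R) : IsUnit a ∨ p ∣ a

theorem exists_isNilpotentUniformizer {R : Type*} [Ring R] [Nontrivial R] [IsArtinian Rᵐᵒᵖ R]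
    (huni : ∀ I J : Submodule Rᵐᵒᵖ R, I ≤ J ∨ J ≤ I) : ∃ p : R, IsNilpotentUniformizer_s16 p := by
  have : IsNoetherian Rᵐᵒᵖ R := isNoetherian_mulOpposite_of_isArtinian
  have : IsDedekindFiniteMonoid R := isDedekindFiniteMonoid_of_isArtinian_mulOpposite
  obtain ⟨p, hp, hdvd⟩ := exists_not_isUnit_forall_isUnit_or_dvd huni
  refine ⟨p, ?_, hdvd⟩
  obtain ⟨n, b, hb⟩ := exists_pow_succ_dvd_pow p
  have hunit : IsUnit (1 - p * b) := (hdvd _).resolve_right fun h ↦ by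
    obtain ⟨c, hc⟩ := (dvd_sub_left (dvd_mul_right p b)).1 h
    exact hp (.of_mul_eq_one c hc.symm)
  have hzero : p ^ n * (1 - p * b) = 0 := by
    rw [mul_sub, mul_one, ← mul_assoc, ← pow_succ, ← hb, sub_self]
  exact ⟨n, hunit.mul_left_eq_zero.1 hzero⟩

namespace IsNilpotentUniformizer_s16

variable {R : Type*} [Semiring R] {p : R}

theorem dvd_mul_self (hp : IsNilpotentUniformizer_s16 p) (s : R) : p ∣ s * p := by
  refine (hp.isUnit_or_dvd (s * p)).elim (fun ⟨u, hu⟩ ↦ ?_) id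
  have : Subsingleton R := subsingleton_of_isNilpotent_of_mul_eq_one (t := ↑u⁻¹ * s)
    hp.isNilpotent (by rw [mul_assoc, ← hu, Units.inv_mul])
  exact ⟨0, Subsingleton.elim _ _⟩

theorem not_isUnit_iff_dvd [Nontrivial R] (hp : IsNilpotentUniformizer_s16 p) {a : R} :
    ¬IsUnit a ↔ p ∣ a :=
  ⟨(hp.isUnit_or_dvd a).resolve_left, fun h ⟨u, hu⟩ ↦
    not_subsingleton R <| subsingleton_of_isNilpotent_of_mul_eq_one
      (isNilpotent_of_dvd_of_forall_dvd_mul hp.dvd_mul_self hp.isNilpotent (hu ▸ h)) u.inv_mul⟩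

theorem isLocalRing [Nontrivial R] (hp : IsNilpotentUniformizer_s16 p) : IsLocalRing R :=
  .of_nonunits_add fun _ _ ha hb ↦
    hp.not_isUnit_iff_dvd.2 (dvd_add (hp.not_isUnit_iff_dvd.1 ha) (hp.not_isUnit_iff_dvd.1 hb))

theorem exists_associated_pow (hp : IsNilpotentUniformizer_s16 p) (a : R) :
    ∃ k, Associated (p ^ k) a := by
  obtain ⟨n, hn⟩ := hp.isNilpotent
  obtain rfl | ha := eq_or_ne a 0
  · exact ⟨n, by rw [hn]⟩
  have hfin : FiniteMultiplicity p a :=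
    ⟨n, fun h ↦ ha (zero_dvd_iff.1 (by simpa only [pow_succ, hn, zero_mul] using h))⟩
  obtain ⟨c, hc, hpc⟩ := hfin.exists_eq_pow_mul_and_not_dvd
  obtain ⟨u, rfl⟩ := (hp.isUnit_or_dvd c).resolve_right hpc
  exact ⟨_, u, hc.symm⟩

theorem exists_le_eq_span_pow (hp : IsNilpotentUniformizer_s16 p) {n : ℕ} (hn : p ^ n = 0)
    (I : Submodule Rᵐᵒᵖ R) : ∃ k ≤ n, I = Submodule.span Rᵐᵒᵖ {p ^ k} := by
  classical
  have hnI : p ^ n ∈ I := hn ▸ I.zero_mem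
  have hex : ∃ k, p ^ k ∈ I := ⟨n, hnI⟩
  refine ⟨Nat.find hex, Nat.find_min' hex hnI, le_antisymm (fun a ha ↦ ?_) ?_⟩
  · obtain ⟨k, hk⟩ := hp.exists_associated_pow a
    have hkI : p ^ k ∈ I := by
      obtain ⟨b, hb⟩ := hk.symm.dvd
      exact hb ▸ I.smul_mem (MulOpposite.op b) ha
    rw [mem_span_op_singleton_iff_dvd]
    exact (pow_dvd_pow p (Nat.find_min' hex hkI)).trans hk.dvd
  · rw [Submodule.span_singleton_le_iff_mem]
    exact Nat.find_spec hex

theorem submodule_le_total (hp : IsNilpotentUniformizer_s16 p) (I J : Submodule Rᵐᵒᵖ R) :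
    I ≤ J ∨ J ≤ I := by
  obtain ⟨n, hn⟩ := hp.isNilpotent
  obtain ⟨k, -, rfl⟩ := hp.exists_le_eq_span_pow hn I
  obtain ⟨l, -, rfl⟩ := hp.exists_le_eq_span_pow hn J
  simp only [span_op_singleton_le_span_op_singleton_iff_dvd]
  exact (Nat.le_total l k).imp (pow_dvd_pow p) (pow_dvd_pow p)

theorem isArtinian (hp : IsNilpotentUniformizer_s16 p) : IsArtinian Rᵐᵒᵖ R := by
  obtain ⟨n, hn⟩ := hp.isNilpotent
  have hsurj : Function.Surjective fun k : Fin (n + 1) ↦ Submodule.span Rᵐᵒᵖ {p ^ (k : ℕ)} :=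
    fun I ↦ by
      obtain ⟨k, hk, rfl⟩ := hp.exists_le_eq_span_pow hn I
      exact ⟨⟨k, Nat.lt_succ_of_le hk⟩, rfl⟩
  have : Finite (Submodule Rᵐᵒᵖ R) := .of_surjective _ hsurj
  exact ⟨wellFounded_lt⟩

theorem map {S F : Type*} [Semiring S] [FunLike F R S] [RingHomClass F R S]
    (hp : IsNilpotentUniformizer_s16 p) {f : F} (hf : Function.Surjective f) :
    IsNilpotentUniformizer_s16 (f p) where
  isNilpotent := hp.isNilpotent.map f
  isUnit_or_dvd := hf.forall.2 fun a ↦ (hp.isUnit_or_dvd a).imp (·.map f) (map_dvd f)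

end IsNilpotentUniformizer_s16

section HahnSeries

open HahnSeries

variable {Γ R : Type*}

theorem hahnSeries_C_dvd_iff_forall_dvd_coeff [AddCommMonoid Γ] [PartialOrder Γ]
    [IsOrderedCancelAddMonoid Γ] [Semiring R] {p : R} {f : R⟦Γ⟧} :
    C p ∣ f ↔ ∀ i, p ∣ f.coeff i := by
  classical
  constructor
  · rintro ⟨g, rfl⟩ i
    exact ⟨g.coeff i, coeff_single_zero_mul⟩
  · intro h
    choose b hb using h
    let g : R⟦Γ⟧ := ⟨fun i ↦ if f.coeff i = 0 then 0 else b i,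
      f.isPWO_support.mono fun i hi h0 ↦ hi (if_pos h0)⟩
    have hg (i : Γ) : f.coeff i = p * g.coeff i := by
      by_cases h0 : f.coeff i = 0
      · simp [g, h0]
      · simpa [g, h0] using hb i
    refine ⟨g, HahnSeries.ext ?_⟩
    funext i
    exact (hg i).trans coeff_single_zero_mul.symm

theorem hahnSeries_C_dvd_mul_C [AddCommMonoid Γ] [PartialOrder Γ] [IsOrderedCancelAddMonoid Γ]
    [Semiring R] {p : R} (hp : ∀ s, p ∣ s * p) (f : R⟦Γ⟧) : C p ∣ f * C p :=
  hahnSeries_C_dvd_iff_forall_dvd_coeff.2 fun i ↦ by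
    simpa only [C_apply, coeff_mul_single_zero] using hp (f.coeff i)

theorem exists_not_dvd_coeff_forall_lt_dvd_coeff [PartialOrder Γ] [Semiring R] {p : R}
    {f : R⟦Γ⟧} (hf : ¬∀ i, p ∣ f.coeff i) :
    ∃ k, ¬p ∣ f.coeff k ∧ ∀ i < k, p ∣ f.coeff i := by
  have hwf : {i | ¬p ∣ f.coeff i}.IsWF :=
    f.isWF_support.mono fun i hi h0 ↦ hi (h0 ▸ dvd_zero p)
  have hne : {i | ¬p ∣ f.coeff i}.Nonempty := not_forall.1 hf
  exact ⟨hwf.min hne, hwf.min_mem hne, fun i hi ↦ not_not.1 fun h ↦ hwf.not_lt_min hne h hi⟩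

theorem isUnit_laurentSeries_of_isUnit_leadingCoeff [Ring R] {f : LaurentSeries R}
    (hf : IsUnit f.leadingCoeff) : IsUnit f := by
  have hsingle : IsUnit (single f.order (1 : R)) :=
    ⟨⟨single f.order 1, single (-f.order) 1, by simp, by simp⟩, rfl⟩
  have hpart : IsUnit f.powerSeriesPart := by
    rw [PowerSeries.isUnit_iff_constantCoeff, ← PowerSeries.coeff_zero_eq_constantCoeff_apply,
      LaurentSeries.powerSeriesPart_coeff]
    simpa [leadingCoeff_eq] using hf
  rw [← LaurentSeries.single_order_mul_powerSeriesPart f]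
  exact hsingle.mul (hpart.map (ofPowerSeries ℤ R))

theorem isUnit_laurentSeries_of_isUnit_coeff [Ring R] {f : LaurentSeries R} {k : ℤ}
    (hk : IsUnit (f.coeff k)) (hlt : ∀ i < k, f.coeff i = 0) : IsUnit f := by
  nontriviality R
  have hle : k ≤ f.order :=
    not_lt.1 fun h ↦ coeff_order_eq_zero.not.2 (ne_zero_of_coeff_ne_zero hk.ne_zero) (hlt _ h)
  have horder : f.order = k := (order_le_of_coeff_ne_zero hk.ne_zero).antisymm hle
  exact isUnit_laurentSeries_of_isUnit_leadingCoeff (by rwa [leadingCoeff_eq, horder])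

theorem IsNilpotentUniformizer_s16.laurentSeries_C [Ring R] {p : R} (hp : IsNilpotentUniformizer_s16 p) :
    IsNilpotentUniformizer_s16 (C p : LaurentSeries R) where
  isNilpotent := hp.isNilpotent.map C
  isUnit_or_dvd f := by
    rw [hahnSeries_C_dvd_iff_forall_dvd_coeff, or_iff_not_imp_right]
    intro hf
    obtain ⟨k, hk, hlt⟩ := exists_not_dvd_coeff_forall_lt_dvd_coeff hf
    have hupper : IsUnit (f - truncLT k f) := by
      refine isUnit_laurentSeries_of_isUnit_coeff (k := k) ?_ fun i hi ↦ ?_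
      · simpa using (hp.isUnit_or_dvd _).resolve_right hk
      · simp [hi]
    have hlower : C p ∣ truncLT k f := hahnSeries_C_dvd_iff_forall_dvd_coeff.2 fun i ↦ by
      rw [HahnSeries.coeff_truncLT]
      split_ifs with hi
      exacts [hlt i hi, dvd_zero p]
    rw [← sub_add_cancel f (truncLT k f)]
    exact isUnit_add_of_dvd_of_forall_dvd_mul (hahnSeries_C_dvd_mul_C hp.dvd_mul_self)
      (hp.isNilpotent.map C) hupper hlower

end HahnSeries

namespace Corner

variable {A : Type*} [Ring A] {e : A}

theorem nontrivial (he : IsIdempotentElem e) (hne : e ≠ 0) : Nontrivial (Corner he) :=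
  ⟨1, 0, fun h ↦ hne (congrArg Subtype.val h)⟩

/-- The inclusion of `eAe` into `A`, which is non-unital since it sends `1` to `e`. -/
def subtype (he : IsIdempotentElem e) : Corner he →ₙ+* A where
  toFun := Subtype.val
  map_mul' _ _ := rfl
  map_zero' := rfl
  map_add' _ _ := rfl

/-- The identification of Hahn series over `eAe` with the corner at `e` of Hahn series over `A`,
obtained by reading coefficients in `eAe` as elements of `A`. -/
noncomputable def hahnSeriesEquiv {Γ : Type*} [AddCommMonoid Γ] [PartialOrder Γ]
    [IsOrderedCancelAddMonoid Γ] (he : IsIdempotentElem e) :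
    HahnSeries Γ (Corner he) ≃+* Corner (he.map (HahnSeries.C : A →+* HahnSeries Γ A)) where
  toFun g := ⟨g.map (subtype he),
    HahnSeries.ext <| funext fun i ↦ HahnSeries.coeff_single_zero_mul.trans (g.coeff i).2.1,
    HahnSeries.ext <| funext fun i ↦ HahnSeries.coeff_mul_single_zero.trans (g.coeff i).2.2⟩
  invFun f := ⟨fun i ↦ ⟨f.1.coeff i,
      HahnSeries.coeff_single_zero_mul.symm.trans (congrArg (HahnSeries.coeff · i) f.2.1),
      HahnSeries.coeff_mul_single_zero.symm.trans (congrArg (HahnSeries.coeff · i) f.2.2)⟩,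
    f.1.isPWO_support.mono fun _ hi h0 ↦ hi (Subtype.ext h0)⟩
  left_inv _ := rfl
  right_inv _ := rfl
  map_mul' _ _ := Subtype.ext (HahnSeries.map_mul (subtype he))
  map_add' _ _ := rfl

end Corner

/-- Let `e` be a nonzero idempotent of a ring `A`, let `R = A((x))` be the Laurent
series ring, and suppose that the corner ring `eAe` is a right uniserial right Artinian
ring (right ideals are submodules over the opposite ring).  Then the corner ring `eRe`
is a right uniserial right Artinian ring; in particular, `e` is a local idempotent of
`R`, i.e. `eRe` is a local ring. -/
theorem stmt16 {A : Type*} [Ring A] {e : A} (he : IsIdempotentElem e) (hne : e ≠ 0)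
    (huni : ∀ I J : Submodule (Corner he)ᵐᵒᵖ (Corner he), I ≤ J ∨ J ≤ I)
    (hart : IsArtinian (Corner he)ᵐᵒᵖ (Corner he)) :
    (∀ I J : Submodule (Corner (isIdempotentElem_C he))ᵐᵒᵖ (Corner (isIdempotentElem_C he)),
        I ≤ J ∨ J ≤ I) ∧
      IsArtinian (Corner (isIdempotentElem_C he))ᵐᵒᵖ (Corner (isIdempotentElem_C he)) ∧
      IsLocalRing (Corner (isIdempotentElem_C he)) := by
  have : Nontrivial (Corner he) := Corner.nontrivial he hne
  have : Nontrivial (Corner (isIdempotentElem_C he)) :=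
    Corner.nontrivial _ (HahnSeries.C_ne_zero hne)
  obtain ⟨p, hp⟩ := exists_isNilpotentUniformizer huni
  have hq := hp.laurentSeries_C.map (Corner.hahnSeriesEquiv he).surjective
  exact ⟨hq.submodule_le_total, hq.isArtinian, hq.isLocalRing⟩
end
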